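/- arXiv:1306.0173 — 8 statements merged into one kernel-verified Lean document; each statement's English description precedes it below -/
import Mathlib

section
/- Let μ ∈ ℝ, σ > 0, and let X be a real random variable with law gaussianReal μ σ². Let f : ℝ → ℝ be convex on [0, ∞) and strictly monotone increasing on [0, ∞), with f(|X − μ|) integrable. Then E[f(|X − μ|)] ≥ f(σ·√(2/π)) > f(0). -/
open MeasureTheory ProbabilityTheory
open scoped NNReal ENNReal

/-
Jensen's inequality bounds `E[f(|X - μ|)]` from below by `f(E|X - μ|)`, and the substitution
`t = (x - μ)² / (2v)` in the Gaussian density turns the absolute moments of `X - μ` into Gamma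
integrals, the first of which gives `E|X - μ| = √(2v/π)`. Since `E|X - μ|` is interior to `[0, ∞)`,
Jensen's inequality follows from the support line of `f` there, and the possible jump of `f` at `0`
is harmless.
-/

section Jensen

variable {s : Set ℝ} {f : ℝ → ℝ}

theorem exists_add_mul_sub_le_of_convexOn {x : ℝ} (hf : ConvexOn ℝ s f) (hx : x ∈ interior s) :
    ∃ c, ∀ y ∈ s, f x + c * (y - x) ≤ f y := by
  refine ⟨derivWithin f (Set.Ioi x) x, fun y hy ↦ ?_⟩
  rcases lt_trichotomy x y with hxy | rfl | hyx
  · have h_slope := hf.rightDeriv_le_slope_of_mem_interior hx hy hxy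
    rw [slope_def_field, le_div_iff₀ (sub_pos.2 hxy)] at h_slope
    linarith
  · simp
  · have h_slope := (hf.slope_le_leftDeriv_of_mem_interior hy hx hyx).trans
      (hf.leftDeriv_le_rightDeriv_of_mem_interior hx)
    rw [slope_def_field, div_le_iff₀ (sub_pos.2 hyx)] at h_slope
    linarith

theorem map_integral_le_of_convexOn_of_mem_interior {Ω : Type*} [MeasurableSpace Ω] {P : Measure Ω}
    [IsProbabilityMeasure P] {Y : Ω → ℝ} (hf : ConvexOn ℝ s f) (hYs : ∀ᵐ ω ∂P, Y ω ∈ s)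
    (hmean : ∫ ω, Y ω ∂P ∈ interior s) (hY : Integrable Y P)
    (hfY : Integrable (fun ω ↦ f (Y ω)) P) :
    f (∫ ω, Y ω ∂P) ≤ ∫ ω, f (Y ω) ∂P := by
  set m := ∫ ω, Y ω ∂P with hm
  obtain ⟨c, hc⟩ := exists_add_mul_sub_le_of_convexOn hf hmean
  have h_dev : Integrable (fun ω ↦ c * (Y ω - m)) P := (hY.sub (integrable_const m)).const_mul c
  calc f m = ∫ ω, (f m + c * (Y ω - m)) ∂P := by
        rw [integral_add (integrable_const _) h_dev, integral_const_mul,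
          integral_sub hY (integrable_const m), ← hm]
        simp
    _ ≤ ∫ ω, f (Y ω) ∂P :=
        integral_mono_ae ((integrable_const _).add h_dev) hfY (hYs.mono fun ω ↦ hc (Y ω))

end Jensen

section GaussianMoments

theorem integral_abs_rpow_mul_exp_neg_mul_sq {b p : ℝ} (hb : 0 < b) (hp : -1 < p) :
    ∫ x : ℝ, |x| ^ p * Real.exp (-b * x ^ 2) =
      b ^ (-(p + 1) / 2) * Real.Gamma ((p + 1) / 2) := by
  calc ∫ x : ℝ, |x| ^ p * Real.exp (-b * x ^ 2)
      = ∫ x : ℝ, |x| ^ p * Real.exp (-b * |x| ^ (2 : ℝ)) := by simp only [Real.rpow_two, sq_abs]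
    _ = 2 * ∫ x in Set.Ioi (0 : ℝ), x ^ p * Real.exp (-b * x ^ (2 : ℝ)) :=
        integral_comp_abs (f := fun x ↦ x ^ p * Real.exp (-b * x ^ (2 : ℝ)))
    _ = b ^ (-(p + 1) / 2) * Real.Gamma ((p + 1) / 2) := by
        rw [integral_rpow_mul_exp_neg_mul_rpow two_pos hp hb]
        ring

theorem integral_abs_sub_rpow_gaussianReal (μ : ℝ) {v : ℝ≥0} (hv : v ≠ 0) {p : ℝ} (hp : -1 < p) :
    ∫ x, |x - μ| ^ p ∂gaussianReal μ v =
      (2 * v) ^ (p / 2) * Real.Gamma ((p + 1) / 2) / √Real.pi := by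
  have h2v : (0 : ℝ) < 2 * v := by positivity
  have h_density (x : ℝ) : gaussianPDFReal μ v x • |x - μ| ^ p =
      (√(2 * Real.pi * v))⁻¹ * (|x - μ| ^ p * Real.exp (-(2 * v : ℝ)⁻¹ * (x - μ) ^ 2)) := by
    have h_exponent : -(x - μ) ^ 2 / (2 * v) = -(2 * v : ℝ)⁻¹ * (x - μ) ^ 2 := by ring
    rw [gaussianPDFReal, h_exponent, smul_eq_mul]
    ring
  have h_const : (√(2 * Real.pi * v))⁻¹ * (2 * v : ℝ)⁻¹ ^ (-(p + 1) / 2) =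
      (2 * v) ^ (p / 2) / √Real.pi := by
    have h_sqrt : √(2 * Real.pi * v) = (2 * v : ℝ) ^ (1 / 2 : ℝ) * √Real.pi := by
      rw [← Real.sqrt_eq_rpow, ← Real.sqrt_mul h2v.le]
      ring_nf
    have h_pow : (2 * v : ℝ)⁻¹ ^ (-(p + 1) / 2) = (2 * v) ^ (p / 2) * (2 * v) ^ (1 / 2 : ℝ) := by
      rw [Real.inv_rpow h2v.le, ← Real.rpow_neg h2v.le, ← Real.rpow_add h2v]
      ring_nf
    rw [h_sqrt, h_pow]
    field_simp
  calc ∫ x, |x - μ| ^ p ∂gaussianReal μ v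
      = (√(2 * Real.pi * v))⁻¹ *
          ∫ x, |x - μ| ^ p * Real.exp (-(2 * v : ℝ)⁻¹ * (x - μ) ^ 2) := by
        rw [integral_gaussianReal_eq_integral_smul hv, ← integral_const_mul]
        simp only [h_density]
    _ = (√(2 * Real.pi * v))⁻¹ * ∫ x : ℝ, |x| ^ p * Real.exp (-(2 * v : ℝ)⁻¹ * x ^ 2) := by
        rw [integral_sub_right_eq_self
          (fun x : ℝ ↦ |x| ^ p * Real.exp (-(2 * v : ℝ)⁻¹ * x ^ 2)) μ]
    _ = (2 * v) ^ (p / 2) * Real.Gamma ((p + 1) / 2) / √Real.pi := by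
        rw [integral_abs_rpow_mul_exp_neg_mul_sq (inv_pos.2 h2v) hp, ← mul_assoc, h_const]
        ring

theorem integral_abs_sub_gaussianReal (μ : ℝ) (v : ℝ≥0) :
    ∫ x, |x - μ| ∂gaussianReal μ v = √(2 * v / Real.pi) := by
  rcases eq_or_ne v 0 with rfl | hv
  · simp
  · have h_moment := integral_abs_sub_rpow_gaussianReal μ hv (p := 1) (by norm_num)
    simp only [Real.rpow_one, one_add_one_eq_two, div_self (two_ne_zero (α := ℝ)), Real.Gamma_one,
      mul_one, ← Real.sqrt_eq_rpow] at h_moment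
    rw [h_moment, Real.sqrt_div (by positivity)]

theorem map_sqrt_le_integral_comp_abs_sub_of_hasLaw_gaussianReal {Ω : Type*} [MeasurableSpace Ω]
    {P : Measure Ω} {μ : ℝ} {v : ℝ≥0} (hv : v ≠ 0) {X : Ω → ℝ} (hX : HasLaw X (gaussianReal μ v) P)
    {f : ℝ → ℝ} (hf : ConvexOn ℝ (Set.Ici 0) f) (hfX : Integrable (fun ω ↦ f |X ω - μ|) P) :
    f √(2 * v / Real.pi) ≤ ∫ ω, f |X ω - μ| ∂P := by
  have : IsProbabilityMeasure P := hX.isProbabilityMeasure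
  have h_mean : ∫ ω, |X ω - μ| ∂P = √(2 * v / Real.pi) := by
    rw [← integral_abs_sub_gaussianReal]
    exact hX.integral_comp (f := fun x ↦ |x - μ|) (by fun_prop)
  have h_int : Integrable X P := by
    have h_id : Integrable id (P.map X) := by
      rw [hX.map_eq]
      exact memLp_one_iff_integrable.1 (memLp_id_gaussianReal 1)
    exact h_id.comp_aemeasurable hX.aemeasurable
  have h_interior : ∫ ω, |X ω - μ| ∂P ∈ interior (Set.Ici (0 : ℝ)) := by
    rw [h_mean, interior_Ici, Set.mem_Ioi]
    positivity
  rw [← h_mean]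
  exact map_integral_le_of_convexOn_of_mem_interior hf (.of_forall fun ω ↦ abs_nonneg (X ω - μ))
    h_interior (h_int.sub (integrable_const μ)).abs hfX

end GaussianMoments

/-- If `X` has law `gaussianReal μ σ²` with `σ > 0` and `f` is convex and strictly
increasing on `[0, ∞)` with `f(|X − μ|)` integrable, then
`E[f(|X − μ|)] ≥ f(σ·√(2/π)) > f(0)`. -/
theorem stmt3 {Ω : Type*} [MeasurableSpace Ω] (P : Measure Ω) [IsProbabilityMeasure P]
    (μ : ℝ) (σ : ℝ≥0) (hσ : 0 < σ) (X : Ω → ℝ) (hXm : Measurable X)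
    (hX : P.map X = gaussianReal μ (σ ^ 2))
    (f : ℝ → ℝ) (hconv : ConvexOn ℝ (Set.Ici 0) f) (hmono : StrictMonoOn f (Set.Ici 0))
    (hint : Integrable (fun ω => f |X ω - μ|) P) :
    (∫ ω, f |X ω - μ| ∂P) ≥ f ((σ : ℝ) * Real.sqrt (2 / Real.pi)) ∧
      f ((σ : ℝ) * Real.sqrt (2 / Real.pi)) > f 0 := by
  have hmean : √(2 * (σ ^ 2 : ℝ≥0) / Real.pi) = (σ : ℝ) * √(2 / Real.pi) := by
    rw [NNReal.coe_pow, mul_comm, mul_div_assoc, Real.sqrt_mul (by positivity),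
      Real.sqrt_sq σ.coe_nonneg]
  have hmean_pos : 0 < (σ : ℝ) * √(2 / Real.pi) := by positivity
  refine ⟨?_, hmono Set.self_mem_Ici hmean_pos.le hmean_pos⟩
  rw [← hmean]
  exact map_sqrt_le_integral_comp_abs_sub_of_hasLaw_gaussianReal (pow_ne_zero 2 hσ.ne')
    ⟨hXm.aemeasurable, hX⟩ hconv hint
end

section
/- Fix K ≥ 2 and a user index i. For each j ≠ i let r_j ∈ ℝ, σ_j > 0, and let R_j be a real random variable with law gaussianReal r_j σ_j² (the user's unbiased observation of user j), with f(|R_j − r_j|) integrable, where f : ℝ → ℝ is convex on [0, ∞) and strictly monotone increasing on [0, ∞). Then −Σ_{j≠i} f(0) > −Σ_{j≠i} E[f(|R_j − r_j|)]; that is, the user's expected utility at the truthful equilibrium of the Absolute Scoring mechanism (where every reputation index equals the corresponding true quality, so each accuracy-loss term equals f(0), and the expected tax is zero) strictly exceeds its reserved utility from staying out and relying on its own observations. Hence the Absolute Scoring mechanism is individually rational. -/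
open MeasureTheory ProbabilityTheory
open scoped NNReal ENNReal

section

variable {Ω : Type*} [MeasurableSpace Ω] {P : Measure Ω}

theorem integral_lt_integral_of_ae_le_of_frequently_lt {g h : Ω → ℝ} (hg : Integrable g P)
    (hh : Integrable h P) (hle : g ≤ᵐ[P] h) (hlt : ∃ᵐ ω ∂P, g ω < h ω) :
    ∫ ω, g ω ∂P < ∫ ω, h ω ∂P := by
  refine (integral_mono_ae hg hh hle).lt_of_ne fun heq => hlt ?_
  filter_upwards [(integral_eq_iff_of_ae_le hg hh hle).1 heq] with ω hω
  exact hω.not_lt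

theorem const_le_integral [IsProbabilityMeasure P] {g : Ω → ℝ} {c : ℝ} (hg : Integrable g P)
    (hle : ∀ᵐ ω ∂P, c ≤ g ω) : c ≤ ∫ ω, g ω ∂P := by
  simpa only [integral_const, probReal_univ, one_smul] using
    integral_mono_ae (integrable_const c) hg hle

theorem const_lt_integral [IsProbabilityMeasure P] {g : Ω → ℝ} {c : ℝ} (hg : Integrable g P)
    (hle : ∀ᵐ ω ∂P, c ≤ g ω) (hlt : ∃ᵐ ω ∂P, c < g ω) : c < ∫ ω, g ω ∂P := by
  simpa only [integral_const, probReal_univ, one_smul] using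
    integral_lt_integral_of_ae_le_of_frequently_lt (integrable_const c) hg hle hlt

theorem ae_ne_of_hasLaw {E : Type*} [MeasurableSpace E] [MeasurableSingletonClass E]
    {μ : Measure E} [NullSingletonClass μ] {X : Ω → E} (hX : HasLaw X μ P) (c : E) :
    ∀ᵐ ω ∂P, X ω ≠ c := by
  have hμ : ∀ᵐ x ∂P.map X, x ≠ c := by
    rw [hX.map_eq]
    exact compl_mem_ae_iff.2 (measure_singleton c)
  exact ae_of_ae_map hX.aemeasurable hμ

theorem ae_ne_of_hasLaw_gaussianReal {X : Ω → ℝ} {m : ℝ} {v : ℝ≥0} (hv : v ≠ 0)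
    (hX : HasLaw X (gaussianReal m v) P) (c : ℝ) : ∀ᵐ ω ∂P, X ω ≠ c :=
  have := nullSingletonClass_gaussianReal (μ := m) hv
  ae_ne_of_hasLaw hX c

end

theorem stmt4_general {Ω E ι : Type*} [MeasurableSpace Ω] [MetricSpace E] (P : Measure Ω)
    [IsProbabilityMeasure P] (s : Finset ι) (r : ι → E) (R : ι → Ω → E) (f : ℝ → ℝ)
    (hf : ∀ x, 0 < x → f 0 < f x) (hR : ∃ j ∈ s, ∃ᵐ ω ∂P, R j ω ≠ r j)
    (hint : ∀ j ∈ s, Integrable (fun ω => f (dist (R j ω) (r j))) P) :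
    -∑ _j ∈ s, f 0 > -∑ j ∈ s, ∫ ω, f (dist (R j ω) (r j)) ∂P := by
  have hmin (j : ι) : ∀ᵐ ω ∂P, f 0 ≤ f (dist (R j ω) (r j)) := .of_forall fun ω => by
    rcases (dist_nonneg : 0 ≤ dist (R j ω) (r j)).eq_or_lt with hzero | hpos
    · rw [← hzero]
    · exact (hf _ hpos).le
  obtain ⟨j, hj, hne⟩ := hR
  have hlt : ∃ᵐ ω ∂P, f 0 < f (dist (R j ω) (r j)) := hne.mono fun _ h => hf _ (dist_pos.2 h)
  exact neg_lt_neg <| Finset.sum_lt_sum (fun k hk => const_le_integral (hint k hk) (hmin k))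
    ⟨j, hj, const_lt_integral (hint j hj) (hmin j) hlt⟩

/-- Individual rationality of the Absolute Scoring mechanism for a truth-type user `i`:
its expected utility at the truthful equilibrium, `−Σ_{j≠i} f(0)`, strictly exceeds the
reserved utility `−Σ_{j≠i} E[f(|R_j − r_j|)]` of staying out and relying on its own
unbiased Gaussian observations `R_j ~ gaussianReal r_j σ_j²`. -/
theorem stmt4 {Ω : Type*} [MeasurableSpace Ω] (P : Measure Ω) [IsProbabilityMeasure P]
    (K : ℕ) (hK : 2 ≤ K) (i : Fin K) (r : Fin K → ℝ) (σ : Fin K → ℝ≥0)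
    (R : Fin K → Ω → ℝ) (f : ℝ → ℝ)
    (hconv : ConvexOn ℝ (Set.Ici 0) f) (hmono : StrictMonoOn f (Set.Ici 0))
    (hσ : ∀ j, j ≠ i → 0 < σ j)
    (hRm : ∀ j, j ≠ i → Measurable (R j))
    (hR : ∀ j, j ≠ i → P.map (R j) = gaussianReal (r j) (σ j ^ 2))
    (hint : ∀ j, j ≠ i → Integrable (fun ω => f |R j ω - r j|) P) :
    -∑ j ∈ Finset.univ.erase i, f 0 >
      -∑ j ∈ Finset.univ.erase i, ∫ ω, f |R j ω - r j| ∂P := by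
  have := Fin.nontrivial_iff_two_le.2 hK
  obtain ⟨j, hj⟩ := exists_ne i
  have hne : ∀ᵐ ω ∂P, R j ω ≠ r j := ae_ne_of_hasLaw_gaussianReal
    (pow_ne_zero 2 (hσ j hj).ne') ⟨(hRm j hj).aemeasurable, hR j hj⟩ (r j)
  exact stmt4_general P _ r R f (fun x hx => hmono Set.self_mem_Ici hx.le hx)
    ⟨j, Finset.mem_erase.2 ⟨hj, Finset.mem_univ j⟩, hne.frequently⟩
    fun k hk => hint k (Finset.ne_of_mem_erase hk)
end

section
/- Let K ≥ 2 and r : Fin K → ℝ with 0 < r_k ≤ 1 for all k. Fix an index i, and let S = Σ_{k ≠ i} r_k (so S > 0). Let f : ℝ → ℝ be monotone nondecreasing on [0, ∞). Then for every x ∈ [0, 1], Σ_{j ≠ i} f( r_j·|x − r_i| / ((x + S)·(r_i + S)) ) ≥ Σ_{j ≠ i} f(0); equivalently, the utility u(x) = −Σ_{j ≠ i} f( r_j·|x − r_i| / ((x + S)·(r_i + S)) ) is maximized at the truthful report x = r_i. Moreover, if f is strictly increasing on [0, ∞), then x = r_i is the unique maximizer over [0,1]. Hence truthful revelation is a Bayesian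 Nash equilibrium of the Fair Ranking mechanism. -/
open MeasureTheory ProbabilityTheory
open scoped NNReal ENNReal

section SumComp

variable {ι α M : Type*} [AddCommMonoid M] [PartialOrder M] {s : Finset ι}

theorem sum_const_le_sum_comp_of_monotoneOn_Ici [Preorder α] [IsOrderedAddMonoid M]
    {a : α} {e : ι → α} {f : α → M} (hf : MonotoneOn f (Set.Ici a)) (he : ∀ j ∈ s, a ≤ e j) :
    ∑ _j ∈ s, f a ≤ ∑ j ∈ s, f (e j) :=
  Finset.sum_le_sum fun j hj => hf Set.self_mem_Ici (he j hj) (he j hj)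

theorem sum_const_lt_sum_comp_of_strictMonoOn_Ici [PartialOrder α]
    [IsOrderedCancelAddMonoid M] {a : α} {e : ι → α} {f : α → M}
    (hf : StrictMonoOn f (Set.Ici a)) (he : ∀ j ∈ s, a ≤ e j) (hlt : ∃ j ∈ s, a < e j) :
    ∑ _j ∈ s, f a < ∑ j ∈ s, f (e j) := by
  obtain ⟨m, hm, hlt⟩ := hlt
  exact Finset.sum_lt_sum
    (fun j hj => hf.monotoneOn Set.self_mem_Ici (he j hj) (he j hj))
    ⟨m, hm, hf Set.self_mem_Ici hlt.le hlt⟩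

end SumComp

/-- The error in the proportional reputation of a truthful user of type `ρ` when some other user
of type `a` reports `x` and all users other than the latter have reports summing to `S`: the
closed form of `|ρ / (x + S) - ρ / (a + S)|` when `ρ ≥ 0` and both denominators are positive. -/
def reputationError {𝕜 : Type*} [Field 𝕜] [LinearOrder 𝕜] (S a x ρ : 𝕜) : 𝕜 :=
  ρ * |x - a| / ((x + S) * (a + S))

section ReputationError

variable {𝕜 : Type*} [Field 𝕜] [LinearOrder 𝕜] [IsStrictOrderedRing 𝕜] {S a x ρ : 𝕜}

theorem reputationError_nonneg (hx : 0 ≤ x + S) (ha : 0 ≤ a + S) (hρ : 0 ≤ ρ) :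
    0 ≤ reputationError S a x ρ :=
  div_nonneg (mul_nonneg hρ (abs_nonneg _)) (mul_nonneg hx ha)

theorem reputationError_pos (hx : 0 < x + S) (ha : 0 < a + S) (hρ : 0 < ρ) (hxa : x ≠ a) :
    0 < reputationError S a x ρ :=
  div_pos (mul_pos hρ (abs_sub_pos.2 hxa)) (mul_pos hx ha)

end ReputationError

theorem stmt6_general {ι 𝕜 M : Type*} [Field 𝕜] [LinearOrder 𝕜] [IsStrictOrderedRing 𝕜]
    [AddCommMonoid M] [PartialOrder M] [IsOrderedCancelAddMonoid M]
    {s : Finset ι} {r : ι → 𝕜} (hr : ∀ j ∈ s, 0 ≤ r j) (hS : 0 < ∑ k ∈ s, r k)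
    {a : 𝕜} (ha : 0 ≤ a) {f : 𝕜 → M} (hf : MonotoneOn f (Set.Ici 0)) :
    (∀ x, 0 ≤ x →
      ∑ _j ∈ s, f 0 ≤ ∑ j ∈ s, f (reputationError (∑ k ∈ s, r k) a x (r j))) ∧
    (StrictMonoOn f (Set.Ici 0) → ∀ x, 0 ≤ x → x ≠ a →
      ∑ _j ∈ s, f 0 < ∑ j ∈ s, f (reputationError (∑ k ∈ s, r k) a x (r j))) := by
  have haS : 0 < a + ∑ k ∈ s, r k := add_pos_of_nonneg_of_pos ha hS
  have hxS {x : 𝕜} (hx : 0 ≤ x) : 0 < x + ∑ k ∈ s, r k := add_pos_of_nonneg_of_pos hx hS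
  have herr {x : 𝕜} (hx : 0 ≤ x) : ∀ j ∈ s, 0 ≤ reputationError (∑ k ∈ s, r k) a x (r j) :=
    fun j hj => reputationError_nonneg (hxS hx).le haS.le (hr j hj)
  refine ⟨fun x hx => sum_const_le_sum_comp_of_monotoneOn_Ici hf (herr hx),
    fun hf' x hx hxa => sum_const_lt_sum_comp_of_strictMonoOn_Ici hf' (herr hx) ?_⟩
  obtain ⟨j, hj, hrj⟩ : ∃ j ∈ s, 0 < r j := (Finset.sum_pos_iff_of_nonneg hr).1 hS
  exact ⟨j, hj, reputationError_pos (hxS hx) haS hrj hxa⟩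

/-- Truthful revelation is a Bayesian Nash equilibrium of the Fair Ranking mechanism:
when all users `k ≠ i` report truthfully, user `i`'s accuracy loss
`Σ_{j≠i} f(r_j·|x − r_i| / ((x + S)(r_i + S)))`, with `S = Σ_{k≠i} r_k`, is minimized
over `x ∈ [0,1]` at the truthful report `x = r_i`; if `f` is strictly increasing on
`[0,∞)`, the truthful report is the unique minimizer. -/
theorem stmt6 (K : ℕ) (hK : 2 ≤ K) (r : Fin K → ℝ) (hr : ∀ k, 0 < r k ∧ r k ≤ 1)
    (i : Fin K) (f : ℝ → ℝ) (hf : MonotoneOn f (Set.Ici 0)) :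
    (∀ x ∈ Set.Icc (0 : ℝ) 1,
        ∑ j ∈ Finset.univ.erase i, f 0 ≤
          ∑ j ∈ Finset.univ.erase i,
            f (r j * |x - r i| /
              ((x + ∑ k ∈ Finset.univ.erase i, r k) *
                (r i + ∑ k ∈ Finset.univ.erase i, r k)))) ∧
    (StrictMonoOn f (Set.Ici 0) →
      ∀ x ∈ Set.Icc (0 : ℝ) 1, x ≠ r i →
        ∑ j ∈ Finset.univ.erase i, f 0 <
          ∑ j ∈ Finset.univ.erase i,
            f (r j * |x - r i| /
              ((x + ∑ k ∈ Finset.univ.erase i, r k) *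
                (r i + ∑ k ∈ Finset.univ.erase i, r k)))) := by
  have : Nontrivial (Fin K) := Fin.nontrivial_iff_two_le.2 hK
  have hS : 0 < ∑ k ∈ Finset.univ.erase i, r k :=
    Finset.sum_pos (fun k _ => (hr k).1) Finset.univ_nontrivial.erase_nonempty
  obtain ⟨hle, hlt⟩ := stmt6_general (fun k _ => (hr k).1.le) hS (hr i).1.le hf
  exact ⟨fun x hx => hle x hx.1, fun hf' x hx => hlt hf' x hx.1⟩
end

section
/- Let σ > 0 and let X be a real random variable with law gaussianReal 0 σ². Then for every c ∈ ℝ and every t ≥ 0, P(|X + c| ≤ t) ≤ P(|X| ≤ t); moreover the inequality is strict whenever c ≠ 0 and t > 0. Equivalently, with Φ the cumulative distribution function of the standard Gaussian, Φ((t − c)/σ) − Φ((−t − c)/σ) ≤ Φ(t/σ) − Φ(−t/σ). -/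
open MeasureTheory ProbabilityTheory
open scoped NNReal ENNReal

/-!
This is Anderson's inequality on the line. Let `f` be even and decreasing on `[0, ∞)`. Moving the
center of a window of radius `t` from `c ≥ 0` to `d ≥ c` loses, on balance, the integral of `f`
over `[c - t, d - t]` and gains the one over `[c + t, d + t]`. Translation by `2 * t` maps the first
interval onto the second and brings no point closer to the origin, so the loss outweighs the gain.
-/

open Metric Set

section Abs

variable {R : Type*} [CommRing R] [LinearOrder R] [IsStrictOrderedRing R] {x t : R}

lemma abs_le_abs_add_two_mul (ht : 0 ≤ t) (hx : -t ≤ x) : |x| ≤ |x + 2 * t| :=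
  (abs_le'.mpr ⟨by linarith, by linarith⟩).trans (le_abs_self _)

lemma abs_lt_abs_add_two_mul (ht : 0 < t) (hx : -t < x) : |x| < |x + 2 * t| :=
  (max_lt (by linarith) (by linarith)).trans_le (le_abs_self _)

end Abs

section EvenFunctions

variable {α β : Type*} [AddCommGroup α] [LinearOrder α] {f : α → β}

lemma even_apply_abs (hf : f.Even) (x : α) : f |x| = f x := by
  rcases abs_choice x with hx | hx <;> rw [hx]
  exact hf x

variable [IsOrderedAddMonoid α] [Preorder β] {x y : α}

lemma le_of_abs_le_of_even_of_antitoneOn (hf : f.Even) (hanti : AntitoneOn f (Ici 0))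
    (h : |x| ≤ |y|) : f y ≤ f x := by
  rw [← even_apply_abs hf x, ← even_apply_abs hf y]
  exact hanti (abs_nonneg x) (abs_nonneg y) h

lemma lt_of_abs_lt_of_even_of_strictAntiOn (hf : f.Even) (hanti : StrictAntiOn f (Ici 0))
    (h : |x| < |y|) : f y < f x := by
  rw [← even_apply_abs hf x, ← even_apply_abs hf y]
  exact hanti (abs_nonneg x) (abs_nonneg y) h

end EvenFunctions

section WindowIntegral

variable {f : ℝ → ℝ} {t : ℝ}

lemma intervalIntegrable_of_even_of_antitoneOn (hf : f.Even) (hanti : AntitoneOn f (Ici 0))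
    (a b : ℝ) : IntervalIntegrable f volume a b := by
  refine intervalIntegrable_of_even (fun x ↦ (hf x).symm) fun x hx ↦ ?_
  refine (hanti.mono ?_).intervalIntegrable
  rw [uIcc_of_le hx.le]
  exact Icc_subset_Ici_self

/-- The integral of `f` over the window `[c - t, c + t]` of radius `t` centered at `c`, viewed as
a function of `c`. It is an oriented interval integral, so it changes sign with `t`. -/
noncomputable def windowIntegral (f : ℝ → ℝ) (t c : ℝ) : ℝ :=
  ∫ x in (c - t)..(c + t), f x

lemma windowIntegral_even (hf : f.Even) (t : ℝ) : (windowIntegral f t).Even := fun c ↦ by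
  calc ∫ x in (-c - t)..(-c + t), f x
      = ∫ x in (-(c + t))..(-(c - t)), f x := by ring_nf
    _ = ∫ x in (c - t)..(c + t), f (-x) := (intervalIntegral.integral_comp_neg f).symm
    _ = ∫ x in (c - t)..(c + t), f x := by simp only [hf.eq]

lemma windowIntegral_sub_windowIntegral (hf : ∀ a b, IntervalIntegrable f volume a b)
    (t c d : ℝ) :
    windowIntegral f t c - windowIntegral f t d =
      ∫ x in (c - t)..(d - t), (f x - f (x + 2 * t)) := by
  have translate : ∫ x in (c - t)..(d - t), f (x + 2 * t) = ∫ x in (c + t)..(d + t), f x := by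
    rw [intervalIntegral.integral_comp_add_right f]
    ring_nf
  rw [intervalIntegral.integral_sub (hf _ _)
    ((IntervalIntegrable.comp_add_right_iff).mpr (hf _ _)), translate]
  exact intervalIntegral.integral_interval_sub_interval_comm (hf _ _) (hf _ _) (hf _ _)

lemma antitoneOn_windowIntegral (hf : f.Even) (hanti : AntitoneOn f (Ici 0)) (ht : 0 ≤ t) :
    AntitoneOn (windowIntegral f t) (Ici 0) := by
  intro c (hc : 0 ≤ c) d _ hcd
  have hint := intervalIntegrable_of_even_of_antitoneOn hf hanti
  rw [← sub_nonneg, windowIntegral_sub_windowIntegral hint]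
  refine intervalIntegral.integral_nonneg (by linarith) fun x hx ↦ sub_nonneg.mpr ?_
  exact le_of_abs_le_of_even_of_antitoneOn hf hanti
    (abs_le_abs_add_two_mul ht (by linarith [hx.1]))

lemma strictAntiOn_windowIntegral (hf : f.Even) (hanti : StrictAntiOn f (Ici 0)) (ht : 0 < t) :
    StrictAntiOn (windowIntegral f t) (Ici 0) := by
  intro c (hc : 0 ≤ c) d _ hcd
  have hint := intervalIntegrable_of_even_of_antitoneOn hf hanti.antitoneOn
  rw [← sub_pos, windowIntegral_sub_windowIntegral hint]
  refine intervalIntegral.intervalIntegral_pos_of_pos_on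
    ((hint _ _).sub ((IntervalIntegrable.comp_add_right_iff).mpr (hint _ _)))
    (fun x hx ↦ sub_pos.mpr ?_) (by linarith)
  exact lt_of_abs_lt_of_even_of_strictAntiOn hf hanti
    (abs_lt_abs_add_two_mul ht (by linarith [hx.1]))

end WindowIntegral

lemma cdf_add_sub_cdf_sub_eq_real_closedBall (ν : Measure ℝ) [IsProbabilityMeasure ν]
    [NullSingletonClass ν] (x : ℝ) {r : ℝ} (hr : 0 ≤ r) :
    cdf ν (x + r) - cdf ν (x - r) = ν.real (closedBall x r) := by
  rw [Real.closedBall_eq_Icc, ← measureReal_congr Ioc_ae_eq_Icc, ← Iic_sdiff_Iic,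
    measureReal_sdiff (Iic_subset_Iic.mpr (by linarith)) measurableSet_Iic, cdf_eq_real,
    cdf_eq_real]

lemma dirac_closedBall_le_of_dist_le {E : Type*} [PseudoMetricSpace E] [MeasurableSpace E]
    [OpensMeasurableSpace E] {a x y : E} {t : ℝ} (h : dist x a ≤ dist y a) :
    Measure.dirac a (closedBall y t) ≤ Measure.dirac a (closedBall x t) := by
  by_cases ha : a ∈ closedBall y t
  · have hx : a ∈ closedBall x t := mem_closedBall'.mpr (h.trans (mem_closedBall'.mp ha))
    rw [Measure.dirac_apply_of_mem hx]
    exact prob_le_one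
  · rw [Measure.dirac_apply' a measurableSet_closedBall, indicator_of_notMem ha]
    exact zero_le

section Gaussian

variable {μ x y t : ℝ} {v : ℝ≥0}

lemma gaussianPDFReal_zero_even (v : ℝ≥0) : (gaussianPDFReal 0 v).Even := fun x ↦ by
  simp only [gaussianPDFReal, sub_zero, neg_sq]

lemma strictAntiOn_gaussianPDFReal (μ : ℝ) (hv : v ≠ 0) :
    StrictAntiOn (gaussianPDFReal μ v) (Ici μ) := by
  intro x (hx : μ ≤ x) y _ hxy
  have hsq : (x - μ) ^ 2 < (y - μ) ^ 2 := by gcongr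
  unfold gaussianPDFReal
  gcongr

lemma gaussianReal_closedBall_eq_windowIntegral (hv : v ≠ 0) (ht : 0 ≤ t) :
    gaussianReal μ v (closedBall x t) =
      ENNReal.ofReal (windowIntegral (gaussianPDFReal 0 v) t (x - μ)) := by
  have center : ∫ y in (x - t)..(x + t), gaussianPDFReal μ v y =
      windowIntegral (gaussianPDFReal 0 v) t (x - μ) := by
    rw [windowIntegral, sub_right_comm, sub_add_eq_add_sub,
      ← intervalIntegral.integral_comp_sub_right (gaussianPDFReal 0 v)]
    simp only [gaussianPDFReal_sub, zero_add]
  rw [gaussianReal_apply_eq_integral μ hv, Real.closedBall_eq_Icc, integral_Icc_eq_integral_Ioc,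
    ← intervalIntegral.integral_of_le (by linarith), center]

theorem gaussianReal_closedBall_le_of_dist_le (h : dist x μ ≤ dist y μ) :
    gaussianReal μ v (closedBall y t) ≤ gaussianReal μ v (closedBall x t) := by
  rcases lt_or_ge t 0 with ht | ht
  · simp [closedBall_eq_empty.mpr ht]
  rcases eq_or_ne v 0 with rfl | hv
  · rw [gaussianReal_zero_var]
    exact dirac_closedBall_le_of_dist_le h
  have heven := gaussianPDFReal_zero_even v
  rw [gaussianReal_closedBall_eq_windowIntegral hv ht,
    gaussianReal_closedBall_eq_windowIntegral hv ht]
  exact ENNReal.ofReal_le_ofReal <| le_of_abs_le_of_even_of_antitoneOn (windowIntegral_even heven t)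
    (antitoneOn_windowIntegral heven (strictAntiOn_gaussianPDFReal 0 hv).antitoneOn ht) h

theorem gaussianReal_closedBall_lt_of_dist_lt (hv : v ≠ 0) (ht : 0 < t) (h : dist x μ < dist y μ) :
    gaussianReal μ v (closedBall y t) < gaussianReal μ v (closedBall x t) := by
  have heven := gaussianPDFReal_zero_even v
  rw [gaussianReal_closedBall_eq_windowIntegral hv ht.le,
    gaussianReal_closedBall_eq_windowIntegral hv ht.le,
    ENNReal.ofReal_lt_ofReal_iff_of_nonneg]
  · exact lt_of_abs_lt_of_even_of_strictAntiOn (windowIntegral_even heven t)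
      (strictAntiOn_windowIntegral heven (strictAntiOn_gaussianPDFReal 0 hv) ht) h
  · exact intervalIntegral.integral_nonneg (by linarith) fun z _ ↦ gaussianPDFReal_nonneg 0 v z

theorem cdf_gaussianReal_add_sub_cdf_sub_le_of_dist_le (hv : v ≠ 0) (ht : 0 ≤ t)
    (h : dist x μ ≤ dist y μ) :
    cdf (gaussianReal μ v) (y + t) - cdf (gaussianReal μ v) (y - t) ≤
      cdf (gaussianReal μ v) (x + t) - cdf (gaussianReal μ v) (x - t) := by
  have := nullSingletonClass_gaussianReal (μ := μ) hv
  rw [cdf_add_sub_cdf_sub_eq_real_closedBall _ _ ht, cdf_add_sub_cdf_sub_eq_real_closedBall _ _ ht]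
  exact ENNReal.toReal_mono (measure_ne_top _ _) (gaussianReal_closedBall_le_of_dist_le h)

end Gaussian

lemma measure_abs_add_le_eq_map_closedBall {Ω : Type*} [MeasurableSpace Ω] {P : Measure Ω}
    {X : Ω → ℝ} (hX : AEMeasurable X P) (c t : ℝ) :
    P {ω | |X ω + c| ≤ t} = P.map X (closedBall (-c) t) := by
  rw [Measure.map_apply_of_aemeasurable hX measurableSet_closedBall]
  simp only [closedBall, Real.dist_eq, sub_neg_eq_add, preimage_ofPred_eq]

/-- If `X` has law `gaussianReal 0 σ²` with `σ > 0`, then for every `c` and every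
`t ≥ 0`, `P(|X + c| ≤ t) ≤ P(|X| ≤ t)`, strictly whenever `c ≠ 0` and `t > 0`;
equivalently, with `Φ` the standard Gaussian cdf,
`Φ((t − c)/σ) − Φ((−t − c)/σ) ≤ Φ(t/σ) − Φ(−t/σ)`. -/
theorem stmt7 {Ω : Type*} [MeasurableSpace Ω] (P : Measure Ω) [IsProbabilityMeasure P]
    (σ : ℝ≥0) (hσ : 0 < σ) (X : Ω → ℝ) (hXm : Measurable X)
    (hX : P.map X = gaussianReal 0 (σ ^ 2)) :
    ∀ (c t : ℝ), 0 ≤ t →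
      (P {ω | |X ω + c| ≤ t} ≤ P {ω | |X ω| ≤ t}) ∧
      (c ≠ 0 → 0 < t → P {ω | |X ω + c| ≤ t} < P {ω | |X ω| ≤ t}) ∧
      (cdf (gaussianReal 0 1) ((t - c) / σ) - cdf (gaussianReal 0 1) ((-t - c) / σ) ≤
        cdf (gaussianReal 0 1) (t / σ) - cdf (gaussianReal 0 1) (-t / σ)) := by
  intro c t ht
  have law (d : ℝ) : P {ω | |X ω + d| ≤ t} = gaussianReal 0 (σ ^ 2) (closedBall (-d) t) := by
    rw [measure_abs_add_le_eq_map_closedBall hXm.aemeasurable, hX]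
  have law_zero : P {ω | |X ω| ≤ t} = gaussianReal 0 (σ ^ 2) (closedBall 0 t) := by
    simpa using law 0
  rw [law c, law_zero]
  refine ⟨gaussianReal_closedBall_le_of_dist_le (by simp), fun hc ht_pos ↦ ?_, ?_⟩
  · exact gaussianReal_closedBall_lt_of_dist_lt (by positivity) ht_pos (by simpa using hc)
  · have h := cdf_gaussianReal_add_sub_cdf_sub_le_of_dist_le (x := 0) (y := -c / σ) (t := t / σ)
      (one_ne_zero (α := ℝ≥0)) (by positivity) ((dist_self _).trans_le dist_nonneg)
    convert h using 3 <;> ring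
end

section
/- Let σ > 0 and let X be a real random variable with law gaussianReal 0 σ². Let f : ℝ → ℝ be monotone nondecreasing with f(|X + c|) and f(|X|) integrable. Then for every c ∈ ℝ, E[f(|X + c|)] ≥ E[f(|X|)]. -/
open MeasureTheory ProbabilityTheory
open scoped NNReal ENNReal

/-!
The reflection `x ↦ -c - x` preserves the reference measure and, up to sign, exchanges `x` with
`x + c`. Hence it exchanges `p x` with `p (x + c)` and `L x` with `L (x + c)` for an even density
`p` and an even loss `L`. Averaging over it, the comparison of `∫ p x * L x` with
`∫ p x * L (x + c)` becomes pointwise: it is the two-term rearrangement inequality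
`p x * L x + p (x + c) * L (x + c) ≤ p x * L (x + c) + p (x + c) * L x`, which holds when `p` and
`L` are oppositely ordered. A centered Gaussian density decreases with `|x|`, whereas `f |x|`
increases.
-/

section Density

variable {Ω α : Type*} [MeasurableSpace Ω] [MeasurableSpace α] {P : Measure Ω} {ν : Measure α}
  {X : Ω → α} {p g : α → ℝ}

theorem integral_comp_eq_integral_mul_of_map_eq_withDensity (hX : AEMeasurable X P)
    (hp_meas : AEMeasurable p ν) (hp_nonneg : ∀ x, 0 ≤ p x)
    (hX_law : P.map X = ν.withDensity fun x => ENNReal.ofReal (p x))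
    (hg : AEStronglyMeasurable g (P.map X)) :
    ∫ ω, g (X ω) ∂P = ∫ x, p x * g x ∂ν := by
  rw [← integral_map hX hg, hX_law, integral_withDensity_eq_integral_toReal_smul₀
    hp_meas.ennreal_ofReal (.of_forall fun _ => ENNReal.ofReal_lt_top)]
  simp only [ENNReal.toReal_ofReal (hp_nonneg _), smul_eq_mul]

theorem integrable_comp_iff_integrable_mul_of_map_eq_withDensity (hX : AEMeasurable X P)
    (hp_meas : AEMeasurable p ν) (hp_nonneg : ∀ x, 0 ≤ p x)
    (hX_law : P.map X = ν.withDensity fun x => ENNReal.ofReal (p x))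
    (hg : AEStronglyMeasurable g (P.map X)) :
    Integrable (fun ω => g (X ω)) P ↔ Integrable (fun x => p x * g x) ν := by
  change Integrable (g ∘ X) P ↔ _
  rw [← integrable_map_measure hg hX, hX_law, integrable_withDensity_iff_integrable_smul₀'
    hp_meas.ennreal_ofReal (.of_forall fun _ => ENNReal.ofReal_lt_top)]
  simp only [ENNReal.toReal_ofReal (hp_nonneg _), smul_eq_mul]

end Density

section EvenDensity

variable {G : Type*} [AddCommGroup G] [MeasurableSpace G] [MeasurableAdd G] [MeasurableNeg G]
  {ν : Measure G} [ν.IsAddLeftInvariant] [ν.IsNegInvariant] {L : G → ℝ}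

theorem integral_mul_le_integral_mul_add_right_of_antivary {p : G → ℝ}
    (hp : Function.Even p) (hL : Function.Even L) (hpL : Antivary p L) (c : G)
    (hint : Integrable (fun x => p x * L x) ν)
    (hint_add : Integrable (fun x => p x * L (x + c)) ν) :
    ∫ x, p x * L x ∂ν ≤ ∫ x, p x * L (x + c) ∂ν := by
  have p_reflect (x : G) : p (-c - x) = p (x + c) := by rw [← hp]; congr 1; abel
  have L_reflect (x : G) : L (-c - x) = L (x + c) := by rw [← hL]; congr 1; abel
  have L_reflect_add (x : G) : L (-c - x + c) = L x := by rw [← hL]; congr 1; abel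
  have hint' : Integrable (fun x => p (x + c) * L (x + c)) ν := by
    simpa only [p_reflect, L_reflect] using hint.comp_sub_left (-c)
  have hint_add' : Integrable (fun x => p (x + c) * L x) ν := by
    simpa only [p_reflect, L_reflect_add] using hint_add.comp_sub_left (-c)
  have integral_reflect : ∫ x, p (x + c) * L (x + c) ∂ν = ∫ x, p x * L x ∂ν := by
    simpa only [p_reflect, L_reflect] using
      integral_sub_left_eq_self (fun x => p x * L x) ν (-c)
  have integral_add_reflect : ∫ x, p (x + c) * L x ∂ν = ∫ x, p x * L (x + c) ∂ν := by
    simpa only [p_reflect, L_reflect_add] using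
      integral_sub_left_eq_self (fun x => p x * L (x + c)) ν (-c)
  have rearrangement : ∫ x, (p x * L x + p (x + c) * L (x + c)) ∂ν ≤
      ∫ x, (p x * L (x + c) + p (x + c) * L x) ∂ν :=
    integral_mono (hint.add hint') (hint_add.add hint_add') fun x =>
      antivary_iff_mul_rearrangement.mp hpL x (x + c)
  rw [integral_add hint hint', integral_add hint_add hint_add', integral_reflect,
    integral_add_reflect] at rearrangement
  linarith

theorem stmt8_general {Ω : Type*} [MeasurableSpace Ω] {P : Measure Ω} {X : Ω → G} {p : G → ℝ}
    (hX : AEMeasurable X P) (hp_meas : AEMeasurable p ν) (hp_nonneg : ∀ x, 0 ≤ p x)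
    (hX_law : P.map X = ν.withDensity fun x => ENNReal.ofReal (p x)) (hL_meas : Measurable L)
    (hp : Function.Even p) (hL : Function.Even L) (hpL : Antivary p L) (c : G)
    (hint_add : Integrable (fun ω => L (X ω + c)) P) (hint : Integrable (fun ω => L (X ω)) P) :
    ∫ ω, L (X ω) ∂P ≤ ∫ ω, L (X ω + c) ∂P := by
  have hL_add : Measurable fun x => L (x + c) := hL_meas.comp (measurable_add_const c)
  rw [integral_comp_eq_integral_mul_of_map_eq_withDensity hX hp_meas hp_nonneg hX_law
      hL_meas.aestronglyMeasurable,
    integral_comp_eq_integral_mul_of_map_eq_withDensity hX hp_meas hp_nonneg hX_law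
      hL_add.aestronglyMeasurable]
  exact integral_mul_le_integral_mul_add_right_of_antivary hp hL hpL c
    ((integrable_comp_iff_integrable_mul_of_map_eq_withDensity hX hp_meas hp_nonneg hX_law
      hL_meas.aestronglyMeasurable).mp hint)
    ((integrable_comp_iff_integrable_mul_of_map_eq_withDensity hX hp_meas hp_nonneg hX_law
      hL_add.aestronglyMeasurable).mp hint_add)

end EvenDensity

theorem even_gaussianPDFReal_zero (v : ℝ≥0) : Function.Even (gaussianPDFReal 0 v) := fun x => by
  simp only [gaussianPDFReal, sub_zero, neg_sq]

theorem antivary_gaussianPDFReal_abs_sub (μ : ℝ) (v : ℝ≥0) :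
    Antivary (gaussianPDFReal μ v) fun x => |x - μ| := fun x y hxy => by
  have hsq : (x - μ) ^ 2 ≤ (y - μ) ^ 2 := sq_le_sq.mpr hxy.le
  simp only [gaussianPDFReal]
  gcongr

theorem antivary_gaussianPDFReal_comp_abs (v : ℝ≥0) {f : ℝ → ℝ} (hf : Monotone f) :
    Antivary (gaussianPDFReal 0 v) fun x => f |x| := by
  have habs : Antivary (gaussianPDFReal 0 v) fun x => |x| := by
    simpa only [sub_zero] using antivary_gaussianPDFReal_abs_sub 0 v
  exact (habs.symm.comp_monotone_left hf).symm

/-- If `X` has law `gaussianReal 0 σ²` with `σ > 0` and `f` is monotone nondecreasing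
with `f(|X + c|)` and `f(|X|)` integrable, then `E[f(|X + c|)] ≥ E[f(|X|)]` for every
`c ∈ ℝ`: biasing an unbiased centered Gaussian estimate cannot reduce the expected loss. -/
theorem stmt8 {Ω : Type*} [MeasurableSpace Ω] (P : Measure Ω) [IsProbabilityMeasure P]
    (σ : ℝ≥0) (hσ : 0 < σ) (X : Ω → ℝ) (hXm : Measurable X)
    (hX : P.map X = gaussianReal 0 (σ ^ 2))
    (f : ℝ → ℝ) (hf : Monotone f) :
    ∀ c : ℝ, Integrable (fun ω => f |X ω + c|) P → Integrable (fun ω => f |X ω|) P →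
      (∫ ω, f |X ω| ∂P) ≤ ∫ ω, f |X ω + c| ∂P := by
  intro c hint_add hint
  have hX_law := hX.trans (gaussianReal_of_var_ne_zero 0 (pow_pos hσ 2).ne')
  exact stmt8_general hXm.aemeasurable (measurable_gaussianPDFReal 0 _).aemeasurable
    (gaussianPDFReal_nonneg 0 _) hX_law (hf.measurable.comp continuous_abs.measurable)
    (even_gaussianPDFReal_zero _) (fun x => congrArg f (abs_neg x))
    (antivary_gaussianPDFReal_comp_abs _ hf) c hint_add hint
end

section
/- Let μ ∈ ℝ, σ' > 0, ε > 0, and let X be a real random variable with law gaussianReal μ σ'², with cumulative distribution function F. Define the punish-reward estimator r̂(x, t) = (t + x)/2 if |x − t| ≤ ε, and r̂(x, t) = t − |t − x| if |x − t| > ε. Then for every x ∈ ℝ, E[r̂(x, X)] = x + (ε/2)·(F(x + ε) − 3·F(x − ε)) − (1/2)·∫_{x−ε}^{x+ε} F(t) dt − 2·∫_{−∞}^{x−ε} F(t) dt, where all integrals converge. -/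
open MeasureTheory ProbabilityTheory
open scoped NNReal ENNReal

/-!
The estimator `r̂(x, ·)` is piecewise linear with kinks or jumps only at `x ± ε`, so it is a
combination of a constant, the hinge functions `t ↦ max (x ± ε - t) 0` and the indicators of
`(-∞, x + ε]` and `(-∞, x - ε)`. The indicators integrate to values of the cdf (a left limit for the
open half-line), and by Fubini the hinge function `max (c - t) 0`, which is the length of `[t, c]`,
integrates to `∫_{-∞}^c F`.
-/

section Cdf

lemma setLIntegral_Iic_measure_Iic (m ν : Measure ℝ) [SFinite m] [SFinite ν] (c : ℝ) :
    ∫⁻ t in Set.Iic c, ν (Set.Iic t) ∂m = ∫⁻ y, m (Set.Icc y c) ∂ν := by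
  have hS : MeasurableSet {p : ℝ × ℝ | p.2 ≤ p.1} :=
    measurableSet_le measurable_snd measurable_fst
  calc ∫⁻ t in Set.Iic c, ν (Set.Iic t) ∂m
      = ((m.restrict (Set.Iic c)).prod ν) {p | p.2 ≤ p.1} := (Measure.prod_apply hS).symm
    _ = ∫⁻ y, m.restrict (Set.Iic c) (Set.Ici y) ∂ν := Measure.prod_apply_symm hS
    _ = ∫⁻ y, m (Set.Icc y c) ∂ν := by
      simp only [Measure.restrict_apply measurableSet_Ici, Set.Ici_inter_Iic]

variable (ν : Measure ℝ) [IsProbabilityMeasure ν] (c : ℝ)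

lemma setLIntegral_Iic_cdf :
    ∫⁻ t in Set.Iic c, ENNReal.ofReal (cdf ν t) = ∫⁻ y, ENNReal.ofReal (max (c - y) 0) ∂ν := by
  simp only [ofReal_cdf, setLIntegral_Iic_measure_Iic, Real.volume_Icc, ENNReal.ofReal_max,
    ENNReal.ofReal_zero, zero_le, max_eq_left]

lemma integrableOn_Iic_cdf_iff :
    IntegrableOn (cdf ν) (Set.Iic c) ↔ Integrable (fun y ↦ max (c - y) 0) ν := by
  have hcdf : AEStronglyMeasurable (cdf ν) (volume.restrict (Set.Iic c)) :=
    (monotone_cdf ν).measurable.aestronglyMeasurable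
  have hhinge : AEStronglyMeasurable (fun y ↦ max (c - y) 0) ν := by fun_prop
  rw [IntegrableOn, ← lintegral_ofReal_ne_top_iff_integrable hcdf (ae_of_all _ (cdf_nonneg ν)),
    setLIntegral_Iic_cdf,
    lintegral_ofReal_ne_top_iff_integrable hhinge (ae_of_all _ fun _ ↦ le_max_right _ _)]

lemma integral_Iic_cdf :
    ∫ t in Set.Iic c, cdf ν t = ∫ y, max (c - y) 0 ∂ν := by
  rw [integral_eq_lintegral_of_nonneg_ae (ae_of_all _ (cdf_nonneg ν))
      (monotone_cdf ν).measurable.aestronglyMeasurable,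
    integral_eq_lintegral_of_nonneg_ae (f := fun y ↦ max (c - y) 0)
      (ae_of_all _ fun _ ↦ le_max_right _ _) (by fun_prop),
    setLIntegral_Iic_cdf]

lemma leftLim_cdf : Function.leftLim (cdf ν) c = ν.real (Set.Iio c) := by
  have hleft : 0 ≤ Function.leftLim (cdf ν) c :=
    (cdf_nonneg ν (c - 1)).trans ((monotone_cdf ν).le_leftLim (sub_one_lt c))
  conv_rhs => rw [← measure_cdf ν]
  rw [measureReal_def, (cdf ν).measure_Iio (tendsto_cdf_atBot ν), sub_zero,
    ENNReal.toReal_ofReal hleft]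

lemma leftLim_cdf_eq_cdf [NullSingletonClass ν] : Function.leftLim (cdf ν) c = cdf ν c := by
  rw [leftLim_cdf, cdf_eq_real, measureReal_congr Iio_ae_eq_Iic]

end Cdf

lemma integrable_max_const_sub {ν : Measure ℝ} [IsFiniteMeasure ν]
    (hν : Integrable (fun t ↦ max (-t) 0) ν) (c : ℝ) :
    Integrable (fun t ↦ max (c - t) 0) ν := by
  have bound (t : ℝ) : max (c - t) 0 ≤ |c| + max (-t) 0 := by grind
  refine ((integrable_const |c|).add hν).mono' (by fun_prop) (ae_of_all _ fun t ↦ ?_)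
  exact (Real.norm_of_nonneg (le_max_right _ _)).trans_le (bound t)

lemma integrable_indicator_one {α : Type*} [MeasurableSpace α] {ν : Measure α} [IsFiniteMeasure ν]
    {s : Set α} (hs : MeasurableSet s) : Integrable (s.indicator (1 : α → ℝ)) ν :=
  (integrable_const 1).indicator hs

/-- The punish-reward estimator `r̂(x, t)` with tolerance `ε`: the reputation assigned to a user
with self-report `x` and aggregate cross-report `t`. -/
noncomputable def punishReward (ε x t : ℝ) : ℝ :=
  if |x - t| ≤ ε then (t + x) / 2 else t - |t - x|

lemma punishReward_eq_hinge_add_indicator {ε : ℝ} (hε : 0 ≤ ε) (x t : ℝ) :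
    punishReward ε x t = x - 1 / 2 * max (x + ε - t) 0 - 3 / 2 * max (x - ε - t) 0
      + ε / 2 * (Set.Iic (x + ε)).indicator 1 t
      - 3 * ε / 2 * (Set.Iio (x - ε)).indicator 1 t := by
  simp only [punishReward, Set.indicator_apply, Set.mem_Iic, Set.mem_Iio, Pi.one_apply]
  rcases lt_or_ge t (x - ε) with below | not_below
  · have far : ¬ |x - t| ≤ ε := fun h ↦ by linarith [le_of_abs_le h]
    rw [if_neg far, abs_of_nonpos (by linarith), max_eq_left (by linarith),
      max_eq_left (by linarith), if_pos (by linarith), if_pos below]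
    ring
  rcases le_or_gt t (x + ε) with not_above | above
  · have near : |x - t| ≤ ε := abs_le.2 ⟨by linarith, by linarith⟩
    rw [if_pos near, max_eq_left (by linarith), max_eq_right (by linarith), if_pos not_above,
      if_neg not_below.not_gt]
    ring
  · have far : ¬ |x - t| ≤ ε := fun h ↦ by linarith [neg_le_of_abs_le h]
    rw [if_neg far, abs_of_nonneg (by linarith), max_eq_right (by linarith),
      max_eq_right (by linarith), if_neg above.not_ge, if_neg not_below.not_gt]
    ring

lemma integrable_punishReward {ν : Measure ℝ} [IsFiniteMeasure ν]
    (hν : Integrable (fun t ↦ max (-t) 0) ν) {ε : ℝ} (hε : 0 ≤ ε) (x : ℝ) :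
    Integrable (punishReward ε x) ν := by
  have h_hinge := integrable_max_const_sub hν
  have hIic := integrable_indicator_one (ν := ν) (measurableSet_Iic (a := x + ε))
  have hIio := integrable_indicator_one (ν := ν) (measurableSet_Iio (a := x - ε))
  rw [funext (punishReward_eq_hinge_add_indicator hε x)]
  fun_prop

lemma integral_punishReward {ν : Measure ℝ} [IsProbabilityMeasure ν]
    (hν : Integrable (fun t ↦ max (-t) 0) ν) {ε : ℝ} (hε : 0 ≤ ε) (x : ℝ) :
    ∫ t, punishReward ε x t ∂ν =
      x + ε / 2 * (cdf ν (x + ε) - 3 * Function.leftLim (cdf ν) (x - ε))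
        - 1 / 2 * (∫ t in (x - ε)..(x + ε), cdf ν t)
        - 2 * ∫ t in Set.Iic (x - ε), cdf ν t := by
  have h_hinge := integrable_max_const_sub hν
  have hIic := integrable_indicator_one (ν := ν) (measurableSet_Iic (a := x + ε))
  have hIio := integrable_indicator_one (ν := ν) (measurableSet_Iio (a := x - ε))
  have hcdf (c : ℝ) : IntegrableOn (cdf ν) (Set.Iic c) :=
    (integrableOn_Iic_cdf_iff ν c).2 (h_hinge c)
  calc ∫ t, punishReward ε x t ∂ν
      = x - 1 / 2 * ∫ t, max (x + ε - t) 0 ∂ν - 3 / 2 * ∫ t, max (x - ε - t) 0 ∂ν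
          + ε / 2 * ν.real (Set.Iic (x + ε)) - 3 * ε / 2 * ν.real (Set.Iio (x - ε)) := by
        simp_rw [punishReward_eq_hinge_add_indicator hε x]
        rw [integral_sub (by fun_prop) (by fun_prop), integral_add (by fun_prop) (by fun_prop),
          integral_sub (by fun_prop) (by fun_prop), integral_sub (by fun_prop) (by fun_prop)]
        simp only [integral_const_mul, integral_const, probReal_univ, one_smul,
          integral_indicator_one measurableSet_Iic, integral_indicator_one measurableSet_Iio]
    _ = _ := by
        rw [← intervalIntegral.integral_Iic_sub_Iic (hcdf _) (hcdf _), leftLim_cdf, cdf_eq_real,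
          integral_Iic_cdf, integral_Iic_cdf]
        ring

theorem stmt10_general {Ω : Type*} [MeasurableSpace Ω] {P : Measure Ω} {ν : Measure ℝ}
    [IsProbabilityMeasure ν] (hν : Integrable (fun t ↦ max (-t) 0) ν) {ε : ℝ} (hε : 0 ≤ ε)
    {X : Ω → ℝ} (hX : HasLaw X ν P) (x : ℝ) :
    IntegrableOn (cdf ν) (Set.Iic (x - ε)) ∧
      Integrable (fun ω ↦ punishReward ε x (X ω)) P ∧
      ∫ ω, punishReward ε x (X ω) ∂P =
        x + ε / 2 * (cdf ν (x + ε) - 3 * Function.leftLim (cdf ν) (x - ε))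
          - 1 / 2 * (∫ t in (x - ε)..(x + ε), cdf ν t)
          - 2 * ∫ t in Set.Iic (x - ε), cdf ν t := by
  have hint : Integrable (punishReward ε x) ν := integrable_punishReward hν hε x
  refine ⟨(integrableOn_Iic_cdf_iff ν _).2 (integrable_max_const_sub hν _), ?_, ?_⟩
  · rw [← hX.map_eq] at hint
    exact hint.comp_aemeasurable hX.aemeasurable
  · exact (hX.integral_comp hint.aestronglyMeasurable).trans (integral_punishReward hν hε x)

/-- Expected reputation under the punish-reward (PR) mechanism: with aggregate
cross-report `X ~ gaussianReal μ σ'²` with cdf `F`, and estimator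
`r̂(x,t) = (t+x)/2` if `|x − t| ≤ ε`, `t − |t − x|` otherwise, we have for every `x`
`E[r̂(x,X)] = x + (ε/2)(F(x+ε) − 3F(x−ε)) − (1/2)∫_{x−ε}^{x+ε} F − 2∫_{−∞}^{x−ε} F`,
all integrals converging. -/
theorem stmt10 {Ω : Type*} [MeasurableSpace Ω] (P : Measure Ω) [IsProbabilityMeasure P]
    (μ : ℝ) (σ' : ℝ≥0) (hσ' : 0 < σ') (ε : ℝ) (hε : 0 < ε)
    (X : Ω → ℝ) (hXm : Measurable X) (hX : P.map X = gaussianReal μ (σ' ^ 2))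
    (F : ℝ → ℝ) (hF : ∀ t, F t = cdf (gaussianReal μ (σ' ^ 2)) t)
    (rhat : ℝ → ℝ → ℝ)
    (hrhat : ∀ x t, rhat x t = if |x - t| ≤ ε then (t + x) / 2 else t - |t - x|) :
    ∀ x : ℝ,
      IntegrableOn F (Set.Iic (x - ε)) ∧
      (∫ ω, rhat x (X ω) ∂P) =
        x + ε / 2 * (F (x + ε) - 3 * F (x - ε))
          - 1 / 2 * (∫ t in (x - ε)..(x + ε), F t)
          - 2 * ∫ t in Set.Iic (x - ε), F t := by
  intro x
  obtain rfl : F = cdf (gaussianReal μ (σ' ^ 2)) := funext hF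
  obtain rfl : rhat = punishReward ε := funext₂ hrhat
  have := nullSingletonClass_gaussianReal (μ := μ) (pow_pos hσ' 2).ne'
  obtain ⟨hcdf, -, hmean⟩ := stmt10_general IsGaussian.integrable_id.neg_part hε.le
    ⟨hXm.aemeasurable, hX⟩ x
  exact ⟨hcdf, by rwa [leftLim_cdf_eq_cdf] at hmean⟩
end

section
/- Let μ ∈ ℝ, σ' > 0, ε > 0, and let X be a real random variable with law gaussianReal μ σ'², with cumulative distribution function F and density φ. Define the punish-reward estimator r̂(x, t) = (t + x)/2 if |x − t| ≤ ε, and r̂(x, t) = t − |t − x| if |x − t| > ε. Then the function x ↦ E[r̂(x, X)] is differentiable on ℝ with derivative 1 + (ε/2)·(φ(x + ε) − 3·φ(x − ε)) − (1/2)·(F(x + ε) + 3·F(x − ε)). -/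
open MeasureTheory ProbabilityTheory
open scoped NNReal ENNReal

/-! As a function of the cross-report `t`, the reputation `r̂(x, t)` is affine on either side of the
thresholds `x ± ε`: it is `x` above `x + ε`, gains `1 / 2 * (t - x)` when `t` falls below `x + ε`,
and a further `3 / 2 * (t - x)` when `t` falls below `x - ε`. Its expectation is therefore a
combination of truncated moments `∫ t in Iic (x + c), (t - x) ∂ν` with `c = ±ε`. For a law `ν` with
density `φ` and cdf `F`, the derivative of such a moment in `x` is `c * φ (x + c) - F (x + c)`: the
first term comes from the moving endpoint and the second from the integrand. -/

section TruncatedMoments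

open Set

theorem hasDerivAt_setIntegral_Iic {E : Type*} [NormedAddCommGroup E] [NormedSpace ℝ E]
    [CompleteSpace E] {f : ℝ → E} {a : ℝ} (hf : Integrable f) (hfa : ContinuousAt f a) :
    HasDerivAt (fun b => ∫ t in Iic b, f t) (f a) a := by
  have split (b : ℝ) : ∫ t in Iic b, f t = (∫ t in Iic a, f t) + ∫ t in a..b, f t := by
    rw [← intervalIntegral.integral_Iic_sub_Iic hf.integrableOn hf.integrableOn,
      add_sub_cancel]
  rw [funext split]
  exact (intervalIntegral.integral_hasDerivAt_right hf.intervalIntegrable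
    hf.aestronglyMeasurable.stronglyMeasurableAtFilter hfa).const_add _

variable {ν : Measure ℝ} {φ : ℝ → ℝ}

theorem hasDerivAt_setIntegral_Iic_withDensity {E : Type*} [NormedAddCommGroup E]
    [NormedSpace ℝ E] [CompleteSpace E] {g : ℝ → E} {a : ℝ}
    (hν : ν = volume.withDensity fun t => ENNReal.ofReal (φ t)) (hφm : AEMeasurable φ)
    (hφ0 : 0 ≤ᵐ[volume] φ) (hg : Integrable g ν) (hφa : ContinuousAt φ a)
    (hga : ContinuousAt g a) :
    HasDerivAt (fun b => ∫ t in Iic b, g t ∂ν) (φ a • g a) a := by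
  subst hν
  have toReal_density : (fun t => (ENNReal.ofReal (φ t)).toReal • g t) =ᵐ[volume]
      fun t => φ t • g t := by
    filter_upwards [hφ0] with t ht
    rw [ENNReal.toReal_ofReal ht]
  have integrable_smul : Integrable fun t => φ t • g t :=
    ((integrable_withDensity_iff_integrable_smul₀' hφm.ennreal_ofReal (by simp)).1 hg).congr
      toReal_density
  have integral_eq (b : ℝ) :
      ∫ t in Iic b, g t ∂volume.withDensity (fun t => ENNReal.ofReal (φ t)) =
        ∫ t in Iic b, φ t • g t := by
    rw [setIntegral_withDensity_eq_setIntegral_toReal_smul₀ hφm.ennreal_ofReal.restrict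
      (by simp) g measurableSet_Iic]
    exact integral_congr_ae (ae_restrict_of_ae toReal_density)
  simp only [integral_eq]
  exact hasDerivAt_setIntegral_Iic integrable_smul (hφa.smul hga)

theorem hasDerivAt_setIntegral_Iic_add_sub [IsFiniteMeasure ν] {c x : ℝ}
    (hν : ν = volume.withDensity fun t => ENNReal.ofReal (φ t)) (hφm : AEMeasurable φ)
    (hφ0 : 0 ≤ᵐ[volume] φ) (hid : Integrable id ν) (hφx : ContinuousAt φ (x + c)) :
    HasDerivAt (fun y => ∫ t in Iic (y + c), (t - y) ∂ν)
      (c * φ (x + c) - ν.real (Iic (x + c))) x := by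
  have split (y : ℝ) : ∫ t in Iic (y + c), (t - y) ∂ν =
      (∫ t in Iic (y + c), id t ∂ν) - y * ∫ _ in Iic (y + c), (1 : ℝ) ∂ν := by
    rw [← integral_const_mul, ← integral_sub hid.integrableOn (integrable_const _)]
    simp only [id, mul_one]
  have moment_deriv : HasDerivAt (fun y => ∫ t in Iic (y + c), id t ∂ν)
      (φ (x + c) • (x + c)) x :=
    (hasDerivAt_setIntegral_Iic_withDensity hν hφm hφ0 hid hφx
      continuousAt_id).comp_add_const x c
  have mass_deriv : HasDerivAt (fun y => ∫ _ in Iic (y + c), (1 : ℝ) ∂ν)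
      (φ (x + c) • 1) x :=
    (hasDerivAt_setIntegral_Iic_withDensity hν hφm hφ0 (integrable_const _) hφx
      continuousAt_const).comp_add_const x c
  simp only [split]
  refine (moment_deriv.sub ((hasDerivAt_id x).mul mass_deriv)).congr_deriv ?_
  simp only [id, smul_eq_mul, setIntegral_const]
  ring

end TruncatedMoments

/-- The reputation `r̂(x, t)` which the punish-reward mechanism with tolerance `ε` assigns to the
self-report `x` when the aggregate cross-report is `t`. -/
noncomputable def prReputation (ε x t : ℝ) : ℝ :=
  if |x - t| ≤ ε then (t + x) / 2 else t - |t - x|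

section PRReputation

open Set

theorem measurable_prReputation (ε x : ℝ) : Measurable (prReputation ε x) :=
  Measurable.ite (measurableSet_le (by fun_prop) measurable_const) (by fun_prop) (by fun_prop)

theorem prReputation_eq_add_indicator {ε : ℝ} (hε : 0 ≤ ε) (x t : ℝ) :
    prReputation ε x t = x + 1 / 2 * (Iic (x + ε)).indicator (fun t => t - x) t +
      3 / 2 * (Iio (x - ε)).indicator (fun t => t - x) t := by
  simp only [prReputation, indicator_apply, mem_Iic, mem_Iio]
  rcases lt_or_ge t (x - ε) with below | above_left
  · rw [if_neg (by rw [abs_of_nonneg] <;> linarith), if_pos (by linarith), if_pos below,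
      abs_of_nonpos (by linarith)]
    ring
  rcases le_or_gt t (x + ε) with below_right | above
  · rw [if_pos (abs_le.2 ⟨by linarith, by linarith⟩), if_pos below_right,
      if_neg above_left.not_gt]
    ring
  · rw [if_neg (by rw [abs_of_nonpos] <;> linarith), if_neg above.not_ge,
      if_neg above_left.not_gt, abs_of_nonneg (by linarith)]
    ring

theorem integral_prReputation {ν : Measure ℝ} [IsProbabilityMeasure ν] (hid : Integrable id ν)
    {ε : ℝ} (hε : 0 ≤ ε) (x : ℝ) :
    ∫ t, prReputation ε x t ∂ν = x + 1 / 2 * ∫ t in Iic (x + ε), (t - x) ∂ν +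
      3 / 2 * ∫ t in Iio (x - ε), (t - x) ∂ν := by
  have hdev : Integrable (fun t => t - x) ν := hid.sub (integrable_const x)
  have hIic := (hdev.indicator (measurableSet_Iic (a := x + ε))).const_mul (1 / 2)
  have hIio := (hdev.indicator (measurableSet_Iio (a := x - ε))).const_mul (3 / 2)
  simp only [prReputation_eq_add_indicator hε]
  rw [integral_add (by fun_prop) hIio, integral_add (integrable_const x) hIic, integral_const_mul,
    integral_const_mul, integral_indicator measurableSet_Iic,
    integral_indicator measurableSet_Iio, integral_const, probReal_univ, one_smul]

end PRReputation

theorem continuous_gaussianPDFReal (μ : ℝ) (v : ℝ≥0) : Continuous (gaussianPDFReal μ v) := by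
  rw [gaussianPDFReal_def]
  fun_prop

theorem stmt11_general {Ω : Type*} [MeasurableSpace Ω] (P : Measure Ω) [IsProbabilityMeasure P]
    {X : Ω → ℝ} (hXi : Integrable X P) {φ : ℝ → ℝ} (hφm : AEMeasurable φ)
    (hφ0 : 0 ≤ᵐ[volume] φ)
    (hX : P.map X = volume.withDensity fun t => ENNReal.ofReal (φ t))
    {ε : ℝ} (hε : 0 ≤ ε) {x : ℝ}
    (hφl : ContinuousAt φ (x - ε)) (hφr : ContinuousAt φ (x + ε)) :
    HasDerivAt (fun y => ∫ ω, prReputation ε y (X ω) ∂P)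
      (1 + ε / 2 * (φ (x + ε) - 3 * φ (x - ε))
        - 1 / 2 * (cdf (P.map X) (x + ε) + 3 * cdf (P.map X) (x - ε))) x := by
  have hXm : AEMeasurable X P := hXi.aemeasurable
  have : IsProbabilityMeasure (P.map X) := Measure.isProbabilityMeasure_map hXm
  have hid : Integrable id (P.map X) :=
    (integrable_map_measure aestronglyMeasurable_id hXm).2 hXi
  have no_atom (a : ℝ) : P.map X {a} = 0 := by
    rw [hX]
    exact withDensity_absolutelyContinuous _ _ (measure_singleton a)
  have expectation_eq (y : ℝ) : ∫ ω, prReputation ε y (X ω) ∂P =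
      y + 1 / 2 * ∫ t in Set.Iic (y + ε), (t - y) ∂P.map X +
        3 / 2 * ∫ t in Set.Iic (y + -ε), (t - y) ∂P.map X := by
    rw [← integral_map hXm (measurable_prReputation ε y).aestronglyMeasurable,
      integral_prReputation hid hε, ← integral_Iic_eq_integral_Iio' (no_atom _),
      sub_eq_add_neg]
  have right_deriv := hasDerivAt_setIntegral_Iic_add_sub hX hφm hφ0 hid hφr
  have left_deriv := hasDerivAt_setIntegral_Iic_add_sub hX hφm hφ0 hid
    (sub_eq_add_neg x ε ▸ hφl)
  simp only [expectation_eq, cdf_eq_real, sub_eq_add_neg x ε]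
  refine (((hasDerivAt_id x).add (right_deriv.const_mul (1 / 2))).add
    (left_deriv.const_mul (3 / 2))).congr_deriv ?_
  ring

/-- Differentiability of the expected reputation in the punish-reward (PR) mechanism:
with aggregate cross-report `X ~ gaussianReal μ σ'²` with cdf `F` and density `φ`, the
map `x ↦ E[r̂(x, X)]` has derivative
`1 + (ε/2)(φ(x+ε) − 3φ(x−ε)) − (1/2)(F(x+ε) + 3F(x−ε))` at every `x`. -/
theorem stmt11 {Ω : Type*} [MeasurableSpace Ω] (P : Measure Ω) [IsProbabilityMeasure P]
    (μ : ℝ) (σ' : ℝ≥0) (hσ' : 0 < σ') (ε : ℝ) (hε : 0 < ε)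
    (X : Ω → ℝ) (hXm : Measurable X) (hX : P.map X = gaussianReal μ (σ' ^ 2))
    (F : ℝ → ℝ) (hF : ∀ t, F t = cdf (gaussianReal μ (σ' ^ 2)) t)
    (φ : ℝ → ℝ) (hφ : ∀ t, φ t = gaussianPDFReal μ (σ' ^ 2) t)
    (rhat : ℝ → ℝ → ℝ)
    (hrhat : ∀ x t, rhat x t = if |x - t| ≤ ε then (t + x) / 2 else t - |t - x|) :
    ∀ x : ℝ,
      HasDerivAt (fun y => ∫ ω, rhat y (X ω) ∂P)
        (1 + ε / 2 * (φ (x + ε) - 3 * φ (x - ε))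
          - 1 / 2 * (F (x + ε) + 3 * F (x - ε))) x := by
  intro x
  have hc := continuous_gaussianPDFReal μ (σ' ^ 2)
  rw [hF, hF, hφ, hφ, ← hX, show rhat = prReputation ε from funext₂ hrhat]
  exact stmt11_general P (HasGaussianLaw.integrable ⟨hX ▸ inferInstance⟩) hc.aemeasurable
    (.of_forall (gaussianPDFReal_nonneg μ _))
    (hX.trans (gaussianReal_of_var_ne_zero μ (pow_ne_zero 2 hσ'.ne'))) hε.le
    hc.continuousAt hc.continuousAt
end

section
/- Let K ≥ 3 and let d : ZMod K → ℝ be arbitrary (representing the discrepancies d_i = |x_{ii} − x_{(i−1)i}| between each user's self-report and the cross-report of its predecessor on the ring). Define the Extended-AS taxes t_i = d_i − (1/(K−2))·Σ_{j ∉ {i, i+1}} d_j, where indices are taken modulo K. Then Σ_{i} t_i = 0; that is, the Extended-AS mechanism is budget balanced for every realization of reports. -/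
/-!
The discrepancy `d j` is withheld from exactly two users, `j` and its predecessor. The other
`K - 2` users each receive the share `1 / (K - 2)` of it, so what `j` pays is returned in full.
-/

open Finset

section DoubleCounting

variable {ι κ : Type*} [Fintype ι] [Fintype κ] [DecidableEq κ]

theorem sum_sum_eq_sum_card_nsmul {M : Type*} [AddCommMonoid M] (s : ι → Finset κ) (f : κ → M) :
    ∑ i, ∑ j ∈ s i, f j = ∑ j, #{i | j ∈ s i} • f j := by
  calc ∑ i, ∑ j ∈ s i, f j
      = ∑ j, ∑ i with j ∈ s i, f j := sum_comm' (by simp)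
    _ = ∑ j, #{i | j ∈ s i} • f j := sum_congr rfl fun _ _ ↦ sum_const _

theorem sum_mul_sum_eq_sum_of_mul_card_eq_one {R : Type*} [Semiring R] {s : ι → Finset κ} {c : R}
    (hc : ∀ j, c * #{i | j ∈ s i} = 1) (f : κ → R) :
    ∑ i, c * ∑ j ∈ s i, f j = ∑ j, f j := by
  rw [← mul_sum, sum_sum_eq_sum_card_nsmul, mul_sum]
  refine sum_congr rfl fun j _ ↦ ?_
  rw [nsmul_eq_mul, ← mul_assoc, hc, one_mul]

end DoubleCounting

section FixedPointFree

variable {ι : Type*} [Fintype ι] [DecidableEq ι]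

theorem filter_mem_univ_sdiff_pair_perm (σ : Equiv.Perm ι) (j : ι) :
    ({i | j ∈ univ \ {i, σ i}} : Finset ι) = {j, σ.symm j}ᶜ := by
  ext i
  simp [Equiv.eq_symm_apply, eq_comm]

theorem card_filter_mem_univ_sdiff_pair_perm_add_two {σ : Equiv.Perm ι}
    (hσ : ∀ i, σ i ≠ i) (j : ι) :
    #{i | j ∈ univ \ {i, σ i}} + 2 = Fintype.card ι := by
  have h_ne : j ≠ σ.symm j := fun h ↦ hσ j ((Equiv.eq_symm_apply σ).mp h)
  rw [filter_mem_univ_sdiff_pair_perm, ← card_pair h_ne, card_compl_add_card]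

theorem stmt19_general {F : Type*} [DivisionRing F] {σ : Equiv.Perm ι}
    (hσ : ∀ i, σ i ≠ i) (hι : (Fintype.card ι : F) ≠ 2) (d : ι → F) :
    ∑ i, (d i - (1 / ((Fintype.card ι : F) - 2)) * ∑ j ∈ univ \ {i, σ i}, d j) = 0 := by
  have h_share (j : ι) :
      1 / ((Fintype.card ι : F) - 2) * #{i | j ∈ univ \ {i, σ i}} = 1 := by
    have h_card : (#{i | j ∈ univ \ {i, σ i}} : F) = Fintype.card ι - 2 :=
      eq_sub_of_add_eq <|
        mod_cast congrArg (Nat.cast (R := F)) (card_filter_mem_univ_sdiff_pair_perm_add_two hσ j)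
    rw [h_card, one_div_mul_cancel (sub_ne_zero.mpr hι)]
  rw [sum_sub_distrib, sum_mul_sum_eq_sum_of_mul_card_eq_one h_share, sub_self]

end FixedPointFree

/-- Budget balance of the Extended-AS mechanism: with `K ≥ 3` users on a ring (indices in
`ZMod K`) and arbitrary discrepancies `d_i`, the taxes
`t_i = d_i − (1/(K−2))·Σ_{j ∉ {i, i+1}} d_j` sum to zero. -/
theorem stmt19 (K : ℕ) [NeZero K] (hK : 3 ≤ K) (d : ZMod K → ℝ) :
    ∑ i : ZMod K,
        (d i - (1 / ((K : ℝ) - 2)) * ∑ j ∈ Finset.univ \ {i, i + 1}, d j) = 0 := by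
  have : Fact (1 < K) := ⟨by lia⟩
  simpa only [ZMod.card, Equiv.coe_addRight] using
    stmt19_general (σ := Equiv.addRight 1) (by simp) (by rw [ZMod.card]; norm_cast; lia) d
end
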